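/- Let N be a finitely generated ℤ-module, β : ℤ^d → N a surjective ℤ-module homomorphism with kernel K := ker β ⊆ ℤ^d, and c ∈ ℤ^d. Set b_ν := β(e_ν) ⊗ 1 ∈ N ⊗_ℤ ℝ and Δ := {η ∈ (N ⊗_ℤ ℝ)^∨ : ⟨η, b_ν⟩ ≥ −c_ν for all ν = 1, …, d}, and assume Δ is compact. Then both the set Δ ∩ N^∨ and the set {α ∈ ℕ^d : ∑_{ν=1}^d k_ν α_ν = ∑_{ν=1}^d k_ν c_ν for every k ∈ K} are finite, and they have the same cardinality. -/

import Mathlib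

open scoped TensorProduct BigOperators

/-!
Both sets are compared inside `ℝ^d`, the first through the affine map
`η ↦ (⟨η, b_ν⟩ + c_ν)_ν` and the second through the coercion `ℕ^d → ℝ^d`. Both maps are injective;
for the first this is because the `b_ν` span `ℝ ⊗ N` when `β` is surjective
(`dual_ext_of_surjective`). The two images are equal: a vector of naturals `α` solves the
equations exactly when the functional `k ↦ ∑ k_ν (α_ν - c_ν)` on `ℤ^d` vanishes on `ker β`, that is,
exactly when it factors through `β` as some `φ : N → ℤ` (`exists_factor_of_ker`), and `α_ν ≥ 0` is
the inequality `⟨φ, b_ν⟩ ≥ -c_ν` defining `Δ`. Torsion in `N` is harmless because `β` is surjective.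
Finiteness holds since the common image consists of integer points in a compact set.
-/

/-- A real functional on `ℝ ⊗ N` is determined by its values on the images of the standard basis
vectors under a surjection `ℤ^d → N`. -/
lemma dual_ext_of_surjective {d : ℕ} {N : Type*} [AddCommGroup N] [Module ℤ N]
    {β : (Fin d → ℤ) →ₗ[ℤ] N} (hβ : Function.Surjective β)
    {η η' : Module.Dual ℝ (ℝ ⊗[ℤ] N)}
    (h : ∀ ν, η ((1 : ℝ) ⊗ₜ[ℤ] β (Pi.single ν 1)) = η' ((1 : ℝ) ⊗ₜ[ℤ] β (Pi.single ν 1))) :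
    η = η' := by
  let T : Module.Dual ℝ (ℝ ⊗[ℤ] N) → (Fin d → ℤ) →ₗ[ℤ] ℝ := fun ζ =>
    (ζ.restrictScalars ℤ) ∘ₗ (TensorProduct.mk ℤ ℝ N 1) ∘ₗ β
  have hT : T η = T η' := by
    refine LinearMap.pi_ext' fun ν => LinearMap.ext_ring ?_
    exact h ν
  refine TensorProduct.AlgebraTensorModule.curry_injective
    (LinearMap.ext_ring (LinearMap.ext fun x => ?_))
  obtain ⟨k, rfl⟩ := hβ x
  exact LinearMap.congr_fun hT k

/-- An integer vector orthogonal to `ker β` is `(φ (β e_ν))_ν` for some `φ : N → ℤ`. -/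
lemma exists_factor_of_ker {d : ℕ} {N : Type*} [AddCommGroup N] [Module ℤ N]
    {β : (Fin d → ℤ) →ₗ[ℤ] N} (hβ : Function.Surjective β) (a : Fin d → ℤ)
    (h : ∀ k : Fin d → ℤ, β k = 0 → ∑ ν, k ν * a ν = 0) :
    ∃ φ : N →ₗ[ℤ] ℤ, ∀ ν, φ (β (Pi.single ν 1)) = a ν := by
  let f : (Fin d → ℤ) →ₗ[ℤ] ℤ := Fintype.linearCombination ℤ a
  have hf : LinearMap.ker β ≤ LinearMap.ker f := fun k hk => by
    simpa [f, Fintype.linearCombination_apply] using h k hk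
  refine ⟨(LinearMap.ker β).liftQ f hf ∘ₗ (β.quotKerEquivOfSurjective hβ).symm, fun ν => ?_⟩
  have : (β.quotKerEquivOfSurjective hβ).symm (β (Pi.single ν 1)) =
      (LinearMap.ker β).mkQ (Pi.single ν 1) := by
    rw [LinearEquiv.symm_apply_eq]; rfl
  simp [this, f]

/-- Pairing of a functional on `N` with `β k`, expanded in the standard basis. -/
lemma map_eq_sum_single {d : ℕ} {N : Type*} [AddCommGroup N] [Module ℤ N]
    (β : (Fin d → ℤ) →ₗ[ℤ] N) (φ : N →ₗ[ℤ] ℤ) (k : Fin d → ℤ) :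
    φ (β k) = ∑ ν, k ν * φ (β (Pi.single ν 1)) := by
  refine (LinearMap.pi_apply_eq_sum_univ (φ ∘ₗ β) k).trans (Finset.sum_congr rfl fun ν _ => ?_)
  have : (fun j => if ν = j then (1 : ℤ) else 0) = Pi.single ν 1 := by
    ext j; simp [Pi.single_apply, eq_comm]
  simp [this]

/-- A set of vectors of naturals whose image in `ℝ^d` is bounded is finite. -/
lemma finite_of_isBounded_natCast {d : ℕ} {B : Set (Fin d → ℕ)}
    (h : Bornology.IsBounded ((fun (α : Fin d → ℕ) (ν : Fin d) => (α ν : ℝ)) '' B)) :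
    B.Finite := by
  obtain ⟨C, hC⟩ := h.exists_norm_le
  refine (Set.finite_Iic (fun _ : Fin d => ⌊C⌋₊)).subset fun α hα ν => Nat.le_floor ?_
  simpa using (norm_le_pi_norm _ ν).trans (hC _ ⟨α, hα, rfl⟩)

/-- Counting form of the lattice-point correspondence: if `Δ` is compact
(equivalently, its homeomorphic affine image `{(⟨η, b_ν⟩ + c_ν)_ν | η ∈ Δ} ⊆ ℝ^d`
is compact), then `Δ ∩ N^∨` and `{α ∈ ℕ^d | ∑ k_ν α_ν = ∑ k_ν c_ν for all k ∈ ker β}`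
are finite sets of the same cardinality. -/
theorem lattice_points_count
    (d : ℕ) (N : Type*) [AddCommGroup N] [Module ℤ N] [Module.Finite ℤ N]
    (β : (Fin d → ℤ) →ₗ[ℤ] N) (hβ : Function.Surjective β) (c : Fin d → ℤ)
    (b : Fin d → ℝ ⊗[ℤ] N)
    (hb : ∀ ν, b ν = (1 : ℝ) ⊗ₜ[ℤ] β (Pi.single ν 1))
    (Δ : Set (Module.Dual ℝ (ℝ ⊗[ℤ] N)))
    (hΔ : Δ = {η | ∀ ν, η (b ν) ≥ -(c ν : ℝ)})
    -- compactness of `Δ`, expressed via its image under the affine embedding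
    -- `η ↦ (⟨η, b_ν⟩ + c_ν)_ν` into `ℝ^d` (a homeomorphism onto its image)
    (hcpt : IsCompact ((fun η : Module.Dual ℝ (ℝ ⊗[ℤ] N) =>
      fun ν => η (b ν) + (c ν : ℝ)) '' Δ)) :
    (Δ ∩ {η | ∃ φ : N →ₗ[ℤ] ℤ, ∀ x : N, η ((1 : ℝ) ⊗ₜ[ℤ] x) = (φ x : ℝ)}).Finite ∧
    {α : Fin d → ℕ | ∀ k : Fin d → ℤ, β k = 0 →
      ∑ ν, k ν * (α ν : ℤ) = ∑ ν, k ν * c ν}.Finite ∧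
    (Δ ∩ {η | ∃ φ : N →ₗ[ℤ] ℤ, ∀ x : N, η ((1 : ℝ) ⊗ₜ[ℤ] x) = (φ x : ℝ)}).ncard =
    {α : Fin d → ℕ | ∀ k : Fin d → ℤ, β k = 0 →
      ∑ ν, k ν * (α ν : ℤ) = ∑ ν, k ν * c ν}.ncard := by
  set A := Δ ∩ {η | ∃ φ : N →ₗ[ℤ] ℤ, ∀ x : N, η ((1 : ℝ) ⊗ₜ[ℤ] x) = (φ x : ℝ)} with hA
  set B := {α : Fin d → ℕ | ∀ k : Fin d → ℤ, β k = 0 →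
      ∑ ν, k ν * (α ν : ℤ) = ∑ ν, k ν * c ν} with hB
  set g := fun η : Module.Dual ℝ (ℝ ⊗[ℤ] N) => fun ν => η (b ν) + (c ν : ℝ) with hg
  let j : (Fin d → ℕ) → Fin d → ℝ := fun α ν => (α ν : ℝ)
  have g_inj : Function.Injective g := fun η η' h =>
    dual_ext_of_surjective hβ fun ν => by simpa [hg, hb] using congrFun h ν
  have j_inj : Function.Injective j := fun α α' h =>
    funext fun ν => by simpa [j] using congrFun h ν
  have himg : g '' A = j '' B := by
    ext y
    constructor
    · rintro ⟨η, ⟨hηΔ, φ, hφ⟩, rfl⟩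
      have hnn : ∀ ν, 0 ≤ φ (β (Pi.single ν 1)) + c ν := fun ν => by
        rw [hΔ] at hηΔ
        have h := hηΔ ν
        rw [hb, hφ] at h
        have : -c ν ≤ φ (β (Pi.single ν 1)) := by exact_mod_cast h
        linarith
      refine ⟨fun ν => (φ (β (Pi.single ν 1)) + c ν).toNat, fun k hk => ?_, funext fun ν => ?_⟩
      · have h0 := map_eq_sum_single β φ k
        rw [hk, map_zero] at h0
        simp only [Int.toNat_of_nonneg (hnn _), mul_add, Finset.sum_add_distrib, ← h0, zero_add]
      · have : (((φ (β (Pi.single ν 1)) + c ν).toNat : ℤ) : ℝ) =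
            ((φ (β (Pi.single ν 1)) + c ν : ℤ) : ℝ) := by rw [Int.toNat_of_nonneg (hnn ν)]
        simp only [j, hg, hb, hφ]
        rw [← Int.cast_natCast, this, Int.cast_add]
    · rintro ⟨α, hα, rfl⟩
      obtain ⟨φ, hφ⟩ := exists_factor_of_ker hβ (fun ν => (α ν : ℤ) - c ν) fun k hk => by
        simp only [mul_sub, Finset.sum_sub_distrib, hα k hk, sub_self]
      -- the real extension of `φ`
      let η : Module.Dual ℝ (ℝ ⊗[ℤ] N) :=
        LinearMap.liftBaseChange ℝ (Algebra.linearMap ℤ ℝ ∘ₗ φ)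
      have hη : ∀ x : N, η ((1 : ℝ) ⊗ₜ[ℤ] x) = (φ x : ℝ) := fun x => by simp [η]
      have hηb : ∀ ν, η (b ν) = (α ν : ℝ) - c ν := fun ν => by
        rw [hb, hη, hφ]; push_cast; rfl
      refine ⟨η, ⟨?_, φ, hη⟩, funext fun ν => ?_⟩
      · rw [hΔ]
        intro ν
        rw [hηb]
        have : (0 : ℝ) ≤ α ν := Nat.cast_nonneg _
        linarith
      · simp [hg, hηb, j]
  have hBfin : B.Finite := finite_of_isBounded_natCast <| by
    change Bornology.IsBounded (j '' B)
    rw [← himg]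
    exact hcpt.isBounded.subset (Set.image_mono Set.inter_subset_left)
  refine ⟨Set.Finite.of_finite_image (himg ▸ hBfin.image j) g_inj.injOn, hBfin, ?_⟩
  rw [← Set.ncard_image_of_injective A g_inj, himg, Set.ncard_image_of_injective B j_inj]
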